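/- Let Ω be a program with weight constraints, Z a consistent set of literals, and Π₁ the set of rules l ← not not l, [C₁],…,[C_n] for every rule C₀ ← C₁,…,C_n of Ω and every positive rule element l of C₀. If the deductive closure cl(Ω^Z) is consistent, then it is the unique answer set for Π₁^Z; if cl(Ω^Z) is inconsistent, then Π₁^Z has no answer sets. -/

import Mathlib

open Classical

/-- A literal: a propositional atom `a` or its classical negation `¬ a`. -/
inductive Lit (α : Type) where
  | pos : α → Lit α
  | neg : α → Lit α

/-- The atom of a literal. -/
def Lit.atom {α : Type} : Lit α → α
  | .pos a => a
  | .neg a => a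

/-- Mapping literals along a map of atoms. -/
def Lit.map {α β : Type} (f : α → β) : Lit α → Lit β
  | .pos a => .pos (f a)
  | .neg a => .neg (f a)

/-- A set of literals is consistent if it contains no pair `a`, `¬ a`. -/
def LitConsistent {α : Type} (Z : Set (Lit α)) : Prop :=
  ∀ a : α, ¬(Lit.pos a ∈ Z ∧ Lit.neg a ∈ Z)

/-- Formulas (nested expressions): elementary formulas are literals, `⊥` and `⊤`;
formulas are built from them using negation as failure `naf`, conjunction `conj`
and disjunction `disj`. -/
inductive Formula (α : Type) where
  | lit : Lit α → Formula α
  | fbot : Formula α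
  | ftop : Formula α
  | naf : Formula α → Formula α
  | conj : Formula α → Formula α → Formula α
  | disj : Formula α → Formula α → Formula α

/-- Satisfaction of a formula by a set of literals. -/
def Formula.sat {α : Type} (Z : Set (Lit α)) : Formula α → Prop
  | .lit l => l ∈ Z
  | .fbot => False
  | .ftop => True
  | .naf F => ¬ F.sat Z
  | .conj F G => F.sat Z ∧ G.sat Z
  | .disj F G => F.sat Z ∨ G.sat Z

/-- A rule with nested expressions: `head ← body`. -/
structure NRule (α : Type) where
  head : Formula α
  body : Formula α

/-- `Z` satisfies a program (a set of rules). -/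
def progSat {α : Type} (Z : Set (Lit α)) (P : Set (NRule α)) : Prop :=
  ∀ r ∈ P, r.body.sat Z → r.head.sat Z

/-- The reduct `F^Z` of a formula relative to a set of literals `Z`. -/
noncomputable def Formula.reduct {α : Type} (Z : Set (Lit α)) : Formula α → Formula α
  | .lit l => .lit l
  | .fbot => .fbot
  | .ftop => .ftop
  | .naf F => if F.sat Z then .fbot else .ftop
  | .conj F G => .conj (F.reduct Z) (G.reduct Z)
  | .disj F G => .disj (F.reduct Z) (G.reduct Z)

/-- The reduct `Π^Z` of a program. -/
noncomputable def progReduct {α : Type} (Z : Set (Lit α)) (P : Set (NRule α)) : Set (NRule α) :=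
  (fun r : NRule α => NRule.mk (r.head.reduct Z) (r.body.reduct Z)) '' P

/-- `Z` is minimal (under inclusion) among the consistent sets of literals satisfying `P`. -/
def MinimalSat {α : Type} (Z : Set (Lit α)) (P : Set (NRule α)) : Prop :=
  LitConsistent Z ∧ progSat Z P ∧
    ∀ Z' : Set (Lit α), LitConsistent Z' → progSat Z' P → Z' ⊆ Z → Z' = Z

/-- `Z` is an answer set for a program `P` with nested expressions:
`Z` is minimal among the consistent sets satisfying the reduct `P^Z`. -/
def AnswerSet {α : Type} (Z : Set (Lit α)) (P : Set (NRule α)) : Prop :=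
  MinimalSat Z (progReduct Z P)

/-- Strong equivalence of programs with nested expressions. -/
def StrongEq {α : Type} (P₁ P₂ : Set (NRule α)) : Prop :=
  ∀ P : Set (NRule α), ∀ Z : Set (Lit α), AnswerSet Z (P₁ ∪ P) ↔ AnswerSet Z (P₂ ∪ P)

/-- Multiple conjunction (the empty conjunction is `⊤`). -/
def bigConj {α : Type} : List (Formula α) → Formula α
  | [] => .ftop
  | F :: Fs => .conj F (bigConj Fs)

/-- Multiple disjunction (the empty disjunction is `⊥`). -/
def bigDisj {α : Type} : List (Formula α) → Formula α
  | [] => .fbot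
  | F :: Fs => .disj F (bigDisj Fs)

/-- `⟨F₁,…,F_n⟩:X`: the disjunction over `I ∈ X` of the conjunctions of the `Fᵢ`, `i ∈ I`. -/
noncomputable def angled {α : Type} {n : ℕ} (F : Fin n → Formula α) (X : Finset (Finset (Fin n))) :
    Formula α :=
  bigDisj (X.toList.map fun I => bigConj (I.toList.map F))
/-- A rule element: a literal (positive rule element) or a literal
prefixed with negation as failure (negative rule element). -/
inductive RElem (α : Type) where
  | pos : Lit α → RElem α
  | neg : Lit α → RElem α

/-- Satisfaction of a rule element by a set of literals. -/
def RElem.sat {α : Type} (Z : Set (Lit α)) : RElem α → Prop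
  | .pos l => l ∈ Z
  | .neg l => l ∉ Z

/-- Whether a rule element is negative. -/
def RElem.isNegB {α : Type} : RElem α → Bool
  | .pos _ => false
  | .neg _ => true

/-- The sum of the weights of the entries of `S` that are satisfied by `Z`. -/
noncomputable def weightSum {α : Type} (Z : Set (Lit α)) (S : List (RElem α × ℝ)) : ℝ :=
  (S.map fun p => if p.1.sat Z then p.2 else 0).sum

/-- A weight constraint `L ≤ {c₁=w₁,…,c_m=w_m} ≤ U` with nonnegative weights;
`L` and `U` may be `−∞`/`+∞`. -/
structure WConstraint (α : Type) where
  L : EReal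
  S : List (RElem α × ℝ)
  U : EReal
  nonneg : ∀ p ∈ S, (0 : ℝ) ≤ p.2

/-- `Z` satisfies the weight constraint `L ≤ S ≤ U`. -/
def WConstraint.sat {α : Type} (Z : Set (Lit α)) (C : WConstraint α) : Prop :=
  C.L ≤ (weightSum Z C.S : EReal) ∧ (weightSum Z C.S : EReal) ≤ C.U

/-- A rule with weight constraints, `C₀ ← C₁,…,C_n`. -/
structure WRule (α : Type) where
  head : WConstraint α
  body : List (WConstraint α)

/-- `Z` satisfies a program with weight constraints. -/
def wProgSat {α : Type} (Z : Set (Lit α)) (Ω : Set (WRule α)) : Prop :=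
  ∀ R ∈ Ω, (∀ C ∈ R.body, C.sat Z) → R.head.sat Z

/-- A weight constraint of the form `L ≤ S` (no upper bound), with nonnegative weights. -/
structure LConstraint (α : Type) where
  L : EReal
  S : List (RElem α × ℝ)
  nonneg : ∀ p ∈ S, (0 : ℝ) ≤ p.2

/-- Satisfaction of a lower-bound constraint (by an arbitrary set of literals). -/
def LConstraint.sat {α : Type} (Z : Set (Lit α)) (C : LConstraint α) : Prop :=
  C.L ≤ (weightSum Z C.S : EReal)

/-- A Horn rule: a literal as head, lower-bound constraints as body. -/
structure HornRule (α : Type) where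
  head : Lit α
  body : List (LConstraint α)

/-- Satisfaction of a set of Horn rules by an arbitrary set of literals. -/
def hornSat {α : Type} (Z : Set (Lit α)) (P : Set (HornRule α)) : Prop :=
  ∀ r ∈ P, (∀ C ∈ r.body, C.sat Z) → r.head ∈ Z

/-- The deductive closure of a set of Horn rules: its unique minimal satisfying
set of literals (the intersection of all satisfying sets). -/
def cl {α : Type} (P : Set (HornRule α)) : Set (Lit α) :=
  ⋂₀ {Z : Set (Lit α) | hornSat Z P}

/-- The sum of the weights of the negative entries of `S` satisfied by `Z`. -/
noncomputable def negSatWeight {α : Type} (Z : Set (Lit α)) (S : List (RElem α × ℝ)) : ℝ :=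
  (S.map fun p => if p.1.isNegB = true ∧ p.1.sat Z then p.2 else 0).sum

/-- The reduct `(L ≤ S)^Z` of a lower-bound constraint: drop the negative entries
of `S` and decrease `L` by the total weight of the negative entries satisfied by `Z`. -/
noncomputable def LConstraint.reduct {α : Type} (Z : Set (Lit α)) (C : LConstraint α) :
    LConstraint α :=
  ⟨C.L - ((negSatWeight Z C.S : ℝ) : EReal),
   C.S.filter (fun p => !p.1.isNegB),
   fun p hp => C.nonneg p (List.mem_of_mem_filter hp)⟩

/-- The lower-bound part `L ≤ S` of a weight constraint `L ≤ S ≤ U`. -/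
def WConstraint.lower {α : Type} (C : WConstraint α) : LConstraint α :=
  ⟨C.L, C.S, C.nonneg⟩

/-- The positive rule elements (as literals) occurring in `S`. -/
def posElems {α : Type} (S : List (RElem α × ℝ)) : Set (Lit α) :=
  {l : Lit α | ∃ w : ℝ, (RElem.pos l, w) ∈ S}

/-- The reduct `Ω^Z` of a program with weight constraints: for each rule
`L₀≤S₀≤U₀ ← C₁,…,C_n` whose upper bounds are all satisfied by `Z`, the Horn rules
`l ← C₁^Z,…,C_n^Z` for all positive rule elements `l` of `S₀` with `l ∈ Z`. -/
noncomputable def wProgReduct {α : Type} (Z : Set (Lit α)) (Ω : Set (WRule α)) :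
    Set (HornRule α) :=
  { r : HornRule α | ∃ R ∈ Ω,
      (∀ C ∈ R.body, (weightSum Z C.S : EReal) ≤ C.U) ∧
      r.head ∈ posElems R.head.S ∧ r.head ∈ Z ∧
      r.body = R.body.map (fun C => C.lower.reduct Z) }

/-- `Z` is an answer set for the program `Ω` with weight constraints. -/
def WAnswerSet {α : Type} (Z : Set (Lit α)) (Ω : Set (WRule α)) : Prop :=
  LitConsistent Z ∧ wProgSat Z Ω ∧ cl (wProgReduct Z Ω) = Z

/-- Strong equivalence of programs with weight constraints. -/
def WStrongEq {α : Type} (Ω₁ Ω₂ : Set (WRule α)) : Prop :=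
  ∀ Ω : Set (WRule α), ∀ Z : Set (Lit α), WAnswerSet Z (Ω₁ ∪ Ω) ↔ WAnswerSet Z (Ω₂ ∪ Ω)

/-- A rule element as a formula: `l` becomes the literal `l`, `not l` becomes `naf l`. -/
def RElem.toFormula {α : Type} : RElem α → Formula α
  | .pos l => .lit l
  | .neg l => .naf (.lit l)

/-- The translation `[L ≤ S]`: the formula `⟨c₁,…,c_m⟩:{I : L ≤ Σ_{i∈I} wᵢ}`. -/
noncomputable def trLower {α : Type} (L : EReal) (S : List (RElem α × ℝ)) : Formula α :=
  angled (fun i : Fin S.length => (S.get i).1.toFormula)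
    (Finset.univ.filter fun I : Finset (Fin S.length) =>
      L ≤ ((∑ i ∈ I, (S.get i).2 : ℝ) : EReal))

/-- The translation `[S ≤ U]`: the formula `not ⟨c₁,…,c_m⟩:{I : U < Σ_{i∈I} wᵢ}`. -/
noncomputable def trUpper {α : Type} (S : List (RElem α × ℝ)) (U : EReal) : Formula α :=
  .naf (angled (fun i : Fin S.length => (S.get i).1.toFormula)
    (Finset.univ.filter fun I : Finset (Fin S.length) =>
      U < ((∑ i ∈ I, (S.get i).2 : ℝ) : EReal)))

/-- The translation `[L ≤ S ≤ U] = [L ≤ S],[S ≤ U]`. -/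
noncomputable def trWC {α : Type} (C : WConstraint α) : Formula α :=
  .conj (trLower C.L C.S) (trUpper C.S C.U)

/-- The formulas `l ; not l` for the positive rule elements `l` of `S`, in order. -/
def choiceFmls {α : Type} (S : List (RElem α × ℝ)) : List (Formula α) :=
  S.filterMap fun p =>
    match p.1 with
    | RElem.pos l => some (Formula.disj (.lit l) (.naf (.lit l)))
    | RElem.neg _ => none

/-- The translation of a rule with weight constraints `C₀ ← C₁,…,C_n`:
`(l₁; not l₁),…,(l_p; not l_p),[C₀] ← [C₁],…,[C_n]`. -/
noncomputable def trRule {α : Type} (R : WRule α) : NRule α :=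
  ⟨bigConj (choiceFmls R.head.S ++ [trWC R.head]), bigConj (R.body.map trWC)⟩

/-- The translation `[Ω]` of a program with weight constraints. -/
noncomputable def trProg {α : Type} (Ω : Set (WRule α)) : Set (NRule α) :=
  trRule '' Ω

/-- The nondisjunctive translation `[Ω]^{nd}`: each rule `C₀ ← C₁,…,C_n` is replaced
by the rules `l ← not not l, [C₁],…,[C_n]` for all positive rule elements `l` of `C₀`
together with `⊥ ← not [C₀], [C₁],…,[C_n]`. -/
noncomputable def ndTrans {α : Type} (Ω : Set (WRule α)) : Set (NRule α) :=
  { r : NRule α | ∃ R ∈ Ω,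
      (∃ l ∈ posElems R.head.S,
        r = ⟨.lit l, bigConj (.naf (.naf (.lit l)) :: R.body.map trWC)⟩) ∨
      r = ⟨.fbot, bigConj (.naf (trWC R.head) :: R.body.map trWC)⟩ }

/-- `Π₁`: the rules `l ← not not l, [C₁],…,[C_n]` for all rules `C₀ ← C₁,…,C_n` of `Ω`
and all positive rule elements `l` of `C₀`. -/
noncomputable def choicePart {α : Type} (Ω : Set (WRule α)) : Set (NRule α) :=
  { r : NRule α | ∃ R ∈ Ω, ∃ l ∈ posElems R.head.S,
      r = ⟨.lit l, bigConj (.naf (.naf (.lit l)) :: R.body.map trWC)⟩ }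


theorem aux_reduct_reduct {α : Type} (Y Z : Set (Lit α)) (F : Formula α) :
    (F.reduct Z).reduct Y = F.reduct Z := by
  induction F with
  | lit l => rfl
  | fbot => rfl
  | ftop => rfl
  | naf F _ =>
    simp only [Formula.reduct]
    split_ifs <;> rfl
  | conj F G hF hG => simp only [Formula.reduct, hF, hG]
  | disj F G hF hG => simp only [Formula.reduct, hF, hG]

theorem aux_sat_naf_reduct {α : Type} (Y Z : Set (Lit α)) (F : Formula α) :
    ((Formula.naf F).reduct Z).sat Y ↔ ¬ F.sat Z := by
  simp only [Formula.reduct]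
  split_ifs with h <;> simp [Formula.sat, h]

theorem aux_bigConj_reduct {α : Type} (Y Z : Set (Lit α)) (l : List (Formula α)) :
    ((bigConj l).reduct Z).sat Y ↔ ∀ F ∈ l, (F.reduct Z).sat Y := by
  induction l with
  | nil => simp [bigConj, Formula.reduct, Formula.sat]
  | cons F l ih => simp [bigConj, Formula.reduct, Formula.sat, ih]

theorem aux_bigDisj_reduct {α : Type} (Y Z : Set (Lit α)) (l : List (Formula α)) :
    ((bigDisj l).reduct Z).sat Y ↔ ∃ F ∈ l, (F.reduct Z).sat Y := by
  induction l with
  | nil => simp [bigDisj, Formula.reduct, Formula.sat]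
  | cons F l ih => simp [bigDisj, Formula.reduct, Formula.sat, ih]

theorem aux_bigConj_sat {α : Type} (Z : Set (Lit α)) (l : List (Formula α)) :
    (bigConj l).sat Z ↔ ∀ F ∈ l, F.sat Z := by
  induction l with
  | nil => simp [bigConj, Formula.sat]
  | cons F l ih => simp [bigConj, Formula.sat, ih]

theorem aux_bigDisj_sat {α : Type} (Z : Set (Lit α)) (l : List (Formula α)) :
    (bigDisj l).sat Z ↔ ∃ F ∈ l, F.sat Z := by
  induction l with
  | nil => simp [bigDisj, Formula.sat]
  | cons F l ih => simp [bigDisj, Formula.sat, ih]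

theorem aux_angled_reduct {α : Type} {n : ℕ} (Y Z : Set (Lit α)) (F : Fin n → Formula α)
    (X : Finset (Finset (Fin n))) :
    ((angled F X).reduct Z).sat Y ↔ ∃ I ∈ X, ∀ i ∈ I, ((F i).reduct Z).sat Y := by
  simp [angled, aux_bigDisj_reduct, aux_bigConj_reduct]

theorem aux_angled_sat {α : Type} {n : ℕ} (Z : Set (Lit α)) (F : Fin n → Formula α)
    (X : Finset (Finset (Fin n))) :
    (angled F X).sat Z ↔ ∃ I ∈ X, ∀ i ∈ I, (F i).sat Z := by
  simp [angled, aux_bigDisj_sat, aux_bigConj_sat]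

theorem aux_sum_le {n : ℕ} (w : Fin n → ℝ) (hw : ∀ i, 0 ≤ w i) (s : Fin n → Prop)
    (I : Finset (Fin n)) (hI : ∀ i ∈ I, s i) :
    ∑ i ∈ I, w i ≤ ∑ i, if s i then w i else 0 := by
  calc ∑ i ∈ I, w i = ∑ i ∈ I, if s i then w i else 0 :=
        Finset.sum_congr rfl fun i hi => by simp [hI i hi]
    _ ≤ _ := Finset.sum_le_univ_sum_of_nonneg fun i => by
        split_ifs
        · exact hw i
        · exact le_rfl

theorem aux_exists_le {n : ℕ} (w : Fin n → ℝ) (hw : ∀ i, 0 ≤ w i) (s : Fin n → Prop)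
    (p : EReal → Prop) (hp : ∀ a b : EReal, a ≤ b → p a → p b) :
    (∃ I : Finset (Fin n), p ((∑ i ∈ I, w i : ℝ) : EReal) ∧ ∀ i ∈ I, s i) ↔
      p ((∑ i, if s i then w i else 0 : ℝ) : EReal) := by
  constructor
  · rintro ⟨I, h, hI⟩
    exact hp _ _ (EReal.coe_le_coe_iff.2 (aux_sum_le w hw s I hI)) h
  · intro h
    refine ⟨Finset.univ.filter s, ?_, by simp⟩
    rwa [Finset.sum_filter]

theorem aux_list_sum {β : Type} (S : List β) (f : β → ℝ) :
    (S.map f).sum = ∑ i : Fin S.length, f (S.get i) := by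
  rw [← List.sum_ofFn]
  congr 1
  apply List.ext_get <;> simp

theorem aux_toFormula_sat {α : Type} (Z : Set (Lit α)) (c : RElem α) :
    c.toFormula.sat Z ↔ c.sat Z := by
  cases c <;> rfl

theorem aux_trUpper {α : Type} (Y Z : Set (Lit α)) (S : List (RElem α × ℝ)) (U : EReal)
    (hS : ∀ p ∈ S, (0 : ℝ) ≤ p.2) :
    ((trUpper S U).reduct Z).sat Y ↔ ((weightSum Z S : ℝ) : EReal) ≤ U := by
  rw [trUpper, aux_sat_naf_reduct, aux_angled_sat, ← not_lt, not_iff_not]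
  simp only [Finset.mem_filter, Finset.mem_univ, true_and, aux_toFormula_sat]
  rw [aux_exists_le (fun i => (S.get i).2) (fun i => hS _ (List.get_mem _ _))
    (fun i => (S.get i).1.sat Z) (fun a => U < a) (fun a b h h' => lt_of_lt_of_le h' h),
    weightSum, aux_list_sum]

theorem aux_split_sum {α : Type} (Y Z : Set (Lit α)) (S : List (RElem α × ℝ)) :
    (S.map fun p => if (p.1.toFormula.reduct Z).sat Y then p.2 else 0).sum =
      weightSum Y (S.filter fun p => !p.1.isNegB) + negSatWeight Z S := by
  induction S with
  | nil => simp [weightSum, negSatWeight]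
  | cons p S ih =>
    obtain ⟨c, w⟩ := p
    rw [List.map_cons, List.sum_cons, ih]
    cases c with
    | pos l =>
      have h1 : weightSum Y (((RElem.pos l, w) :: S).filter fun p => !p.1.isNegB) =
          (if (RElem.pos l).sat Y then w else 0) +
            weightSum Y (S.filter fun p => !p.1.isNegB) := rfl
      have h2 : negSatWeight Z ((RElem.pos l, w) :: S) = negSatWeight Z S := by
        simp [negSatWeight, RElem.isNegB]
      have h3 : ((RElem.pos l).toFormula.reduct Z).sat Y ↔ (RElem.pos l).sat Y := Iff.rfl
      rw [h1, h2]
      by_cases h : (RElem.pos l).sat Y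
      · rw [if_pos h, if_pos (h3.2 h)]
        ring
      · rw [if_neg h, if_neg (fun h' => h (h3.1 h'))]
        ring
    | neg l =>
      have h1 : weightSum Y (((RElem.neg l, w) :: S).filter fun p => !p.1.isNegB) =
          weightSum Y (S.filter fun p => !p.1.isNegB) := rfl
      have h2 : negSatWeight Z ((RElem.neg l, w) :: S) =
          (if (RElem.neg l).isNegB = true ∧ (RElem.neg l).sat Z then w else 0) +
            negSatWeight Z S := rfl
      have h3 : ((RElem.neg l).toFormula.reduct Z).sat Y ↔
          (RElem.neg l).isNegB = true ∧ (RElem.neg l).sat Z := by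
        simp only [RElem.toFormula, aux_sat_naf_reduct]
        simp [RElem.isNegB, RElem.sat, Formula.sat]
      rw [h1, h2]
      by_cases h : (RElem.neg l).isNegB = true ∧ (RElem.neg l).sat Z
      · rw [if_pos h, if_pos (h3.2 h)]
        ring
      · rw [if_neg h, if_neg (fun h' => h (h3.1 h'))]
        ring

theorem aux_trLower {α : Type} (Y Z : Set (Lit α)) (C : WConstraint α) :
    ((trLower C.L C.S).reduct Z).sat Y ↔ (C.lower.reduct Z).sat Y := by
  rw [trLower, aux_angled_reduct]
  simp only [Finset.mem_filter, Finset.mem_univ, true_and]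
  rw [aux_exists_le (fun i => (C.S.get i).2) (fun i => C.nonneg _ (List.get_mem _ _))
    (fun i => ((C.S.get i).1.toFormula.reduct Z).sat Y) (fun a => C.L ≤ a)
    (fun a b h h' => h'.trans h),
    ← aux_list_sum C.S (fun p => if (p.1.toFormula.reduct Z).sat Y then p.2 else 0),
    aux_split_sum, LConstraint.sat]
  simp only [LConstraint.reduct, WConstraint.lower]
  rw [EReal.sub_le_iff_le_add (by simp) (by simp), EReal.coe_add]

theorem aux_trWC {α : Type} (Y Z : Set (Lit α)) (C : WConstraint α) :
    ((trWC C).reduct Z).sat Y ↔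
      (C.lower.reduct Z).sat Y ∧ ((weightSum Z C.S : ℝ) : EReal) ≤ C.U := by
  rw [← aux_trLower, ← aux_trUpper Y Z C.S C.U C.nonneg]
  rfl

theorem aux_progReduct_twice {α : Type} (Y Z : Set (Lit α)) (P : Set (NRule α)) :
    progReduct Y (progReduct Z P) = progReduct Z P := by
  simp only [progReduct, Set.image_image, aux_reduct_reduct]

theorem aux_sat_iff {α : Type} (Y Z : Set (Lit α)) (Ω : Set (WRule α)) :
    progSat Y (progReduct Z (choicePart Ω)) ↔ hornSat Y (wProgReduct Z Ω) := by
  constructor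
  · rintro h ⟨l, b⟩ ⟨R, hR, hU, hl, hlZ, hb⟩ hbody
    simp only at hl hlZ hb hbody
    subst hb
    refine h _ ⟨_, ⟨R, hR, l, hl, rfl⟩, rfl⟩ ?_
    simp only [aux_bigConj_reduct, List.mem_cons, List.mem_map]
    rintro F (rfl | ⟨C, hC, rfl⟩)
    · simpa [aux_sat_naf_reduct, Formula.sat] using hlZ
    · exact (aux_trWC Y Z C).2 ⟨hbody _ (List.mem_map_of_mem hC), hU C hC⟩
  · rintro h _ ⟨_, ⟨R, hR, l, hl, rfl⟩, rfl⟩ hbody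
    simp only [aux_bigConj_reduct, List.mem_cons, List.mem_map] at hbody
    have hlZ : l ∈ Z := by
      simpa [aux_sat_naf_reduct, Formula.sat] using hbody _ (Or.inl rfl)
    have hC : ∀ C ∈ R.body, _ := fun C hC => (aux_trWC Y Z C).1 (hbody _ (Or.inr ⟨C, hC, rfl⟩))
    refine h ⟨l, _⟩ ⟨R, hR, fun C h => (hC C h).2, hl, hlZ, rfl⟩ ?_
    simp only [List.mem_map]
    rintro _ ⟨C, h, rfl⟩
    exact (hC C h).1

theorem aux_mono {α : Type} {Y Y' Z : Set (Lit α)} (h : Y ⊆ Y') (C : LConstraint α)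
    (hC : (C.reduct Z).sat Y) : (C.reduct Z).sat Y' := by
  refine le_trans hC (EReal.coe_le_coe_iff.2 ?_)
  refine List.sum_le_sum fun p hp => ?_
  have hn := (C.reduct Z).nonneg p hp
  have hp2 : p.1.isNegB = false := by simpa using (List.mem_filter.1 hp).2
  obtain ⟨c, w⟩ := p
  cases c with
  | neg l => simp [RElem.isNegB] at hp2
  | pos l =>
    by_cases h1 : (RElem.pos l).sat Y
    · have h2 : (RElem.pos l).sat Y' := h h1
      rw [if_pos h1, if_pos h2]
    · rw [if_neg h1]
      split_ifs
      · exact hn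
      · exact le_rfl

theorem aux_cl_sat {α : Type} (Z : Set (Lit α)) (Ω : Set (WRule α)) :
    hornSat (cl (wProgReduct Z Ω)) (wProgReduct Z Ω) := by
  intro r hr hbody W hW
  refine hW r hr fun C hC => ?_
  have hc := hbody C hC
  obtain ⟨R, -, -, -, -, hb⟩ := hr
  rw [hb] at hC
  obtain ⟨D, -, rfl⟩ := List.mem_map.1 hC
  exact aux_mono (Set.sInter_subset_of_mem hW) _ hc

/-- If `cl(Ω^Z)` is consistent then it is the unique answer set for `Π₁^Z`;
otherwise `Π₁^Z` has no answer sets. -/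
theorem closure_unique_answer_set (Ω : Set (WRule ℕ)) (Z : Set (Lit ℕ))
    (hZ : LitConsistent Z) :
    (LitConsistent (cl (wProgReduct Z Ω)) →
      ∀ Y : Set (Lit ℕ),
        AnswerSet Y (progReduct Z (choicePart Ω)) ↔ Y = cl (wProgReduct Z Ω)) ∧
    (¬ LitConsistent (cl (wProgReduct Z Ω)) →
      ∀ Y : Set (Lit ℕ), ¬ AnswerSet Y (progReduct Z (choicePart Ω))) := by
  have key : ∀ Y : Set (Lit ℕ), AnswerSet Y (progReduct Z (choicePart Ω)) ↔
      LitConsistent Y ∧ hornSat Y (wProgReduct Z Ω) ∧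
        ∀ Z' : Set (Lit ℕ), LitConsistent Z' → hornSat Z' (wProgReduct Z Ω) → Z' ⊆ Y →
          Z' = Y := by
    intro Y
    simp only [AnswerSet, MinimalSat, aux_progReduct_twice, aux_sat_iff]
  have hsub : ∀ Y : Set (Lit ℕ), hornSat Y (wProgReduct Z Ω) → cl (wProgReduct Z Ω) ⊆ Y :=
    fun Y hY => Set.sInter_subset_of_mem hY
  refine ⟨fun hc Y => ?_, fun hc Y hY => ?_⟩
  · rw [key]
    constructor
    · rintro ⟨-, h2, h3⟩
      exact (h3 _ hc (aux_cl_sat Z Ω) (hsub Y h2)).symm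
    · rintro rfl
      exact ⟨hc, aux_cl_sat Z Ω, fun Z' _ h h' => h'.antisymm (hsub Z' h)⟩
  · obtain ⟨h1, h2, -⟩ := (key Y).1 hY
    exact hc fun a ha => h1 a ⟨hsub Y h2 ha.1, hsub Y h2 ha.2⟩
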